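/- For every m ≥ 2 and every ε > 0, there exists a group G generated by a set A of m elements such that G is amenable and the growth rate ω(G,A) is at least 2m - 1 - ε. Consequently, there is no constant c_m with 1 < c_m < 2m-1 such that every m-generated group G with ω(G,A) ≥ c_m is non-amenable; this answers de la Harpe's question in the negative. -/

import Mathlib

open Filter Topology

/-- Evaluate a word over the alphabet `A^{±1}` (a letter is a pair `(i, b)`, where
`b = true` means the generator `σ i` and `b = false` means its inverse) in a group. -/
def wordEval {m : ℕ} {G : Type*} [Group G] (σ : Fin m → G)
    (w : List (Fin m × Bool)) : G :=
  (w.map fun ℓ => if ℓ.2 then σ ℓ.1 else (σ ℓ.1)⁻¹).prod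

/-- The ball `B(n) = {g ∈ G : ℓ(g) ≤ n}` of radius `n` in a group with respect to the
generating map `σ`: the set of elements represented by words of length at most `n`. -/
def ball {m : ℕ} {G : Type*} [Group G] (σ : Fin m → G) (n : ℕ) : Set G :=
  {g | ∃ w : List (Fin m × Bool), w.length ≤ n ∧ wordEval σ w = g}

/-- The growth rate `ω(G, A) = lim_{n→∞} |B(n)|^{1/n}`; the limit exists by
submultiplicativity of `|B(n)|`, hence equals the `limsup`. -/
noncomputable def growthRate {m : ℕ} {G : Type*} [Group G] (σ : Fin m → G) : ℝ :=
  Filter.limsup (fun n : ℕ => ((ball σ n).ncard : ℝ) ^ (1 / (n : ℝ))) Filter.atTop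

/-- A group is *amenable* if it admits a finitely additive, left-invariant probability
measure defined on all of its subsets. -/
def IsAmenable (G : Type*) [Group G] : Prop :=
  ∃ μ : Set G → ℝ,
    (∀ s : Set G, 0 ≤ μ s) ∧
    μ Set.univ = 1 ∧
    (∀ s t : Set G, Disjoint s t → μ (s ∪ t) = μ s + μ t) ∧
    (∀ (g : G) (s : Set G), μ ((g * ·) '' s) = μ s)

/-- `G` is amenable, generated by the `m` elements `σ 0, …, σ (m-1)`, and has growth rate
at least `2m - 1 - ε` with respect to these generators. -/
def IsAmenableWithLargeGrowth (m : ℕ) (ε : ℝ) (G : Type) [Group G] (σ : Fin m → G) : Prop :=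
  Subgroup.closure (Set.range σ) = ⊤ ∧ IsAmenable G ∧
    2 * (m : ℝ) - 1 - ε ≤ growthRate σ

/-!
Let `F` be the free group on the alphabet `A`, and let `H = K × ℤ`, where `K` is a finite quotient
of `F` and the second coordinate of `F → H` is the exponent sum (the height). Recording modulo `2`
which edges of the Cayley graph of `H` are crossed by the path of a word defines a homomorphism
from `F` to the wreath product of `(ℤ/2)^A` by `H`. The wreath product, and hence the image `G`,
is amenable: Følner's condition holds for finite groups, for `ℤ` and for torsion abelian groups,
and passes to extensions.

Words whose paths in `H` are self-avoiding have distinct images in `G`: the first edge of such a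
path is crossed exactly once, so it can be read off from the image and then removed.

To obtain many self-avoiding words, concatenate reduced words, called blocks, of a fixed length `L`
and of positive height. A long factor of a concatenation has nonzero height, whereas a short one is
a reduced word, hence survives in `K` as soon as `K` is large, by residual finiteness of `F`.
Inversion negates the height, so at least half of the reduced words of length `l` have nonnegative
height, and adding five letters turns them into blocks. With `L = l + 5` the growth rate of `G` is
at least `((2m - 1) ^ l / 2) ^ (1 / L)`, which tends to `2m - 1`.
-/

open scoped Pointwise symmDiff ENNReal Finset

section Amenability

open Classical in
/-- Følner's condition: for every finite `E ⊆ G` and every `n` there is a nonempty finite set `F`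
of which each element of `E` translates at most the proportion `1 / n` outside `F`. -/
def FoelnerCondition (G : Type*) [Group G] : Prop :=
  ∀ (E : Finset G) (n : ℕ), ∃ F : Finset G, F.Nonempty ∧
    ∀ g ∈ E, n * #{x ∈ F | g * x ∉ F} ≤ #F

variable {G : Type*} [Group G]

lemma card_smul_symmDiff_le [DecidableEq G] (F : Finset G) (g : G) :
    #((g • F) ∆ F) ≤ #{x ∈ F | g * x ∉ F} + #{x ∈ F | g⁻¹ * x ∉ F} := by
  have hout : g • F \ F ⊆ g • {x ∈ F | g * x ∉ F} := fun y hy => by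
    simpa [← Finset.inv_smul_mem_iff] using hy
  have hin : F \ g • F ⊆ {x ∈ F | g⁻¹ * x ∉ F} := fun y hy => by
    simpa [← Finset.inv_smul_mem_iff] using hy
  calc #((g • F) ∆ F) ≤ #(g • F \ F) + #(F \ g • F) := Finset.card_union_le _ _
    _ ≤ #{x ∈ F | g * x ∉ F} + #{x ∈ F | g⁻¹ * x ∉ F} :=
      add_le_add ((Finset.card_le_card hout).trans_eq (Finset.card_smul_finset _ _))
        (Finset.card_le_card hin)

open MeasureTheory in
lemma FoelnerCondition.exists_isFoelner [MeasurableSpace G] [DiscreteMeasurableSpace G]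
    (hG : FoelnerCondition G) :
    ∃ F : Finset G × ℕ → Set G, IsFoelner G (Measure.count : Measure G) atTop F := by
  classical
  choose F hF hFE using hG
  refine ⟨fun p => F p.1 p.2, .of_forall fun _ => .of_discrete, .of_forall fun p => ?_,
    .of_forall fun p => by simp, fun g => ?_⟩
  · simpa using (hF _ _).ne_empty
  have hbound : ∀ᶠ p : Finset G × ℕ in atTop,
      Measure.count ((g • (F p.1 p.2 : Set G)) ∆ F p.1 p.2) / Measure.count (F p.1 p.2 : Set G)
        ≤ 2 / (p.2 : ℝ≥0∞) := by
    filter_upwards [eventually_ge_atTop ({g, g⁻¹}, 1)] with p hp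
    have hg := hFE p.1 p.2 g (hp.1 (by simp))
    have hg' := hFE p.1 p.2 g⁻¹ (hp.1 (by simp))
    have hdiff := Nat.mul_le_mul_left p.2 (card_smul_symmDiff_le (F p.1 p.2) g)
    have hcast : (g • (F p.1 p.2 : Set G)) ∆ F p.1 p.2 = ↑((g • F p.1 p.2) ∆ F p.1 p.2) := by
      push_cast; rfl
    have hp0 : (p.2 : ℝ≥0∞) ≠ 0 := by
      exact_mod_cast (Nat.one_le_iff_ne_zero.mp hp.2)
    rw [hcast, Measure.count_apply_finset, Measure.count_apply_finset,
      ENNReal.div_le_iff (by simp [(hF _ _).ne_empty]) (by simp), ENNReal.mul_comm_div,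
      ← mul_div_assoc, ENNReal.le_div_iff_mul_le (.inl hp0) (.inl (by simp))]
    norm_cast
    lia
  have hlim : Tendsto (fun p : Finset G × ℕ => 2 / (p.2 : ℝ≥0∞)) atTop (𝓝 0) := by
    have htwo := ENNReal.Tendsto.const_div ENNReal.tendsto_nat_nhds_top (.inr (by simp : 2 ≠ ∞))
    rw [ENNReal.div_top] at htwo
    exact htwo.comp (tendsto_snd.mono_left prod_atTop_atTop_eq.ge)
  exact tendsto_of_tendsto_of_tendsto_of_le_of_le' tendsto_const_nhds hlim
    (.of_forall fun _ => zero_le) hbound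

lemma FoelnerCondition.isAmenable (hG : FoelnerCondition G) : IsAmenable G := by
  classical
  let _ : MeasurableSpace G := ⊤
  obtain ⟨F, hF⟩ := hG.exists_isFoelner
  obtain ⟨μ, huniv, hadd, hinv⟩ := hF.amenable
  have hfin (s : Set G) : μ s ≠ ∞ := by
    refine ((le_self_add (b := μ sᶜ)).trans_lt ?_).ne
    rw [← hadd _ _ trivial disjoint_compl_right, Set.union_compl_self, huniv]
    exact ENNReal.one_lt_top
  refine ⟨fun s => (μ s).toReal, fun s => ENNReal.toReal_nonneg, by simp [huniv],
    fun s t hst => ?_, fun g s => congrArg ENNReal.toReal (hinv g s)⟩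
  simp only [hadd s t trivial hst, ENNReal.toReal_add (hfin s) (hfin t)]

lemma IsAmenable.subgroup (hG : IsAmenable G) (H : Subgroup G) : IsAmenable H := by
  obtain ⟨μ, hnonneg, huniv, hadd, hinv⟩ := hG
  obtain ⟨T, hT, -⟩ := H.exists_isComplement_right 1
  refine ⟨fun s => μ {g | (hT.equiv g).1 ∈ s}, fun s => hnonneg _, by simpa using huniv,
    fun s t hst => hadd _ _ (hst.preimage _), fun h s => ?_⟩
  have htranslate : {g | (hT.equiv g).1 ∈ (h * ·) '' s} =
      ((h : G) * ·) '' {g | (hT.equiv g).1 ∈ s} := by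
    ext g
    simp [Set.image_mul_left, ← Subgroup.coe_inv, -InvMemClass.coe_inv, hT.equiv_mul_left]
  simp only [htranslate, hinv]

lemma FoelnerCondition.of_forall_finite_closure
    (hG : ∀ E : Finset G, Finite (Subgroup.closure (E : Set G))) : FoelnerCondition G := by
  intro E n
  have hfin : (Subgroup.closure (E : Set G) : Set G).Finite := hG E
  refine ⟨hfin.toFinset, ⟨1, by simp [one_mem]⟩, fun g hg => ?_⟩
  have hmem : g ∈ Subgroup.closure (E : Set G) := Subgroup.subset_closure hg
  rw [Finset.card_eq_zero.mpr, mul_zero]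
  · exact zero_le
  · simpa [Finset.filter_eq_empty_iff] using fun x hx => mul_mem hmem hx

lemma FoelnerCondition.of_finite [Finite G] : FoelnerCondition G :=
  .of_forall_finite_closure fun _ => inferInstance

lemma FoelnerCondition.of_commGroup_isMulTorsion {A : Type*} [CommGroup A]
    (hA : IsMulTorsion A) : FoelnerCondition A :=
  .of_forall_finite_closure fun _ => CommGroup.finite_of_fg_isMulTorsion _ (hA.subgroup _)

open Multiplicative in
lemma FoelnerCondition.multiplicative_int : FoelnerCondition (Multiplicative ℤ) := by
  intro E n
  obtain ⟨B, hB⟩ : ∃ B : ℕ, ∀ g ∈ E, g.toAdd.natAbs ≤ B :=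
    ⟨E.sup fun g => g.toAdd.natAbs, fun g hg => Finset.le_sup (f := fun g => g.toAdd.natAbs) hg⟩
  obtain ⟨N, hN⟩ : ∃ N : ℕ, N = n * (2 * B) + 1 := ⟨_, rfl⟩
  let I : Finset (Multiplicative ℤ) := (Finset.Ico (0 : ℤ) N).map ofAdd.toEmbedding
  refine ⟨I, by simp [I]; lia, fun g hg => ?_⟩
  let ends : Finset ℤ := Finset.Ico 0 (-g.toAdd) ∪ Finset.Ico (N - g.toAdd) N
  have hends : #ends ≤ 2 * B := by
    refine (Finset.card_union_le _ _).trans ?_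
    have := hB g hg
    simp only [Int.card_Ico]
    lia
  calc _ ≤ n * #(ends.map ofAdd.toEmbedding) := by
        refine Nat.mul_le_mul_left n (Finset.card_le_card fun x hx => ?_)
        simp only [I, ends, Finset.mem_filter, Finset.mem_map_equiv, ofAdd_symm_eq, toAdd_mul,
          Finset.mem_Ico, Finset.mem_union] at hx ⊢
        lia
    _ ≤ n * (2 * B) := by rw [Finset.card_map]; exact Nat.mul_le_mul_left n hends
    _ ≤ #I := by rw [Finset.card_map, Int.card_Ico]; lia

lemma exists_section_exists_cocycle {N E Q : Type*} [Group N] [Group E] [Group Q]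
    (S : GroupExtension N E Q) :
    ∃ (s : Q → E) (c : E → Q → N), (∀ q, S.rightHom (s q) = q) ∧
      ∀ g q, g * s q = s (S.rightHom g * q) * S.inl (c g q) := by
  obtain ⟨s, hs⟩ := S.rightHom_surjective.hasRightInverse
  have hcocycle (g : E) (q : Q) : ∃ a : N, g * s q = s (S.rightHom g * q) * S.inl a := by
    have hker : (s (S.rightHom g * q))⁻¹ * (g * s q) ∈ S.inl.range := by
      rw [S.range_inl_eq_ker_rightHom, MonoidHom.mem_ker]
      simp [hs _]
    obtain ⟨a, ha⟩ := hker
    exact ⟨a, by rw [ha, mul_inv_cancel_left]⟩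
  choose c hc using hcocycle
  exact ⟨s, c, hs, hc⟩

lemma mul_card_filter_product_le {α β : Type*} {s : Finset α} {t : Finset β} {p : α → Prop}
    {r : α → β → Prop} [DecidablePred p] [∀ a, DecidablePred (r a)] {n : ℕ}
    (hs : 2 * n * #{a ∈ s | p a} ≤ #s) (ht : ∀ a ∈ s, 2 * n * #{b ∈ t | r a b} ≤ #t) :
    n * #{x ∈ s ×ˢ t | p x.1 ∨ r x.1 x.2} ≤ #(s ×ˢ t) := by
  classical
  have hfiber : 2 * n * #{x ∈ s ×ˢ t | r x.1 x.2} ≤ #s * #t := by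
    simp only [Finset.card_filter, Finset.sum_product, Finset.mul_sum] at ht ⊢
    exact Finset.sum_le_card_nsmul _ _ _ ht
  have hbase : 2 * n * #{x ∈ s ×ˢ t | p x.1} ≤ #s * #t := by
    rw [Finset.filter_product_left, Finset.card_product, ← mul_assoc]
    exact Nat.mul_le_mul_right _ hs
  have hunion := Nat.mul_le_mul_left n
    (Finset.card_union_le {x ∈ s ×ˢ t | p x.1} {x ∈ s ×ˢ t | r x.1 x.2})
  rw [Finset.filter_or, Finset.card_product]
  linarith

open Classical in
lemma FoelnerCondition.of_groupExtension {N E Q : Type*} [Group N] [Group E] [Group Q]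
    (S : GroupExtension N E Q) (hN : FoelnerCondition N) (hQ : FoelnerCondition Q) :
    FoelnerCondition E := by
  obtain ⟨s, c, hs, hc⟩ := exists_section_exists_cocycle S
  intro T n
  obtain ⟨F, hF, hTF⟩ := hQ (T.image S.rightHom) (2 * n)
  obtain ⟨A, hA, hTA⟩ := hN ((T ×ˢ F).image fun p => c p.1 p.2) (2 * n)
  have hinj : Function.Injective fun p : Q × N => s p.1 * S.inl p.2 := by
    rintro ⟨q, a⟩ ⟨q', a'⟩ h
    obtain rfl : q = q' := by simpa [hs] using congrArg S.rightHom h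
    simpa [S.inl_injective.eq_iff] using h
  refine ⟨(F ×ˢ A).map ⟨_, hinj⟩, (hF.product hA).map, fun g hg => ?_⟩
  have hexit : {x ∈ (F ×ˢ A).map ⟨_, hinj⟩ | g * x ∉ (F ×ˢ A).map ⟨_, hinj⟩} ⊆
      ({p ∈ F ×ˢ A | S.rightHom g * p.1 ∉ F ∨ c g p.1 * p.2 ∉ A}).map ⟨_, hinj⟩ := by
    intro x hx
    obtain ⟨hx, hgx⟩ := Finset.mem_filter.mp hx
    obtain ⟨⟨q, a⟩, hqa, rfl⟩ := Finset.mem_map.mp hx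
    refine Finset.mem_map_of_mem _ (Finset.mem_filter.mpr ⟨hqa, ?_⟩)
    have hgqa : g * (s q * S.inl a) = s (S.rightHom g * q) * S.inl (c g q * a) := by
      rw [← mul_assoc, hc, map_mul, mul_assoc]
    by_contra! h
    exact hgx (Finset.mem_map.mpr ⟨(_, _), Finset.mk_mem_product h.1 h.2, hgqa.symm⟩)
  calc n * _ ≤ n * #{p ∈ F ×ˢ A | S.rightHom g * p.1 ∉ F ∨ c g p.1 * p.2 ∉ A} :=
        Nat.mul_le_mul_left n ((Finset.card_le_card hexit).trans_eq (Finset.card_map _))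
    _ ≤ #(F ×ˢ A) :=
        mul_card_filter_product_le (hTF _ (Finset.mem_image_of_mem _ hg)) fun q hq =>
          hTA _ (Finset.mem_image_of_mem _ (Finset.mk_mem_product hg hq))
    _ = _ := (Finset.card_map _).symm

/-- The group extension `1 → N → N × Q → Q → 1`. -/
def prodGroupExtension (N Q : Type*) [Group N] [Group Q] : GroupExtension N (N × Q) Q where
  inl := .inl N Q
  rightHom := .snd N Q
  inl_injective _ _ h := congrArg Prod.fst h
  range_inl_eq_ker_rightHom := by
    ext x
    exact ⟨by rintro ⟨a, rfl⟩; rfl, fun h => ⟨x.1, Prod.ext rfl h.symm⟩⟩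
  rightHom_surjective := Prod.snd_surjective

/-- The group extension `1 → (Q → D) → D ≀ᵣ Q → Q → 1`. -/
def wreathGroupExtension (D Q : Type*) [Group D] [Group Q] :
    GroupExtension (Q → D) (D ≀ᵣ Q) Q where
  inl :=
    { toFun f := ⟨f, 1⟩
      map_one' := rfl
      map_mul' f f' := by ext <;> simp }
  rightHom := RegularWreathProduct.rightHom
  inl_injective _ _ h := congrArg RegularWreathProduct.left h
  range_inl_eq_ker_rightHom := by
    ext x
    exact ⟨by rintro ⟨f, rfl⟩; rfl, fun h =>
      ⟨x.left, by ext <;> simp_all [MonoidHom.mem_ker]⟩⟩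
  rightHom_surjective q := ⟨RegularWreathProduct.inl q, rfl⟩

lemma FoelnerCondition.regularWreathProduct {D Q : Type*} [CommGroup D] [Group Q]
    (hD : Monoid.ExponentExists D) (hQ : FoelnerCondition Q) : FoelnerCondition (D ≀ᵣ Q) := by
  refine .of_groupExtension (wreathGroupExtension D Q) (.of_commGroup_isMulTorsion ?_) hQ
  obtain ⟨n, hn, hpow⟩ := hD
  exact ExponentExists.isMulTorsion ⟨n, hn, fun f => funext fun q => hpow (f q)⟩

end Amenability

section ResiduallyFinite

lemma exists_perm_forall_mul_mem {G : Type*} [Group G] (V : Set G) [Finite V] (g : G) :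
    ∃ p : Equiv.Perm V, ∀ v : V, g * v ∈ V → (p v : G) = g * v := by
  classical
  have := Fintype.ofFinite V
  let e : {v : V // g * v ∈ V} ≃ {v : V // g⁻¹ * v ∈ V} :=
    { toFun v := ⟨⟨g * v, v.2⟩, by simp⟩
      invFun v := ⟨⟨g⁻¹ * v, v.2⟩, by simp⟩
      left_inv v := by simp
      right_inv v := by simp }
  exact ⟨e.extendSubtype, fun v h => by rw [e.extendSubtype_apply_of_mem v h]; rfl⟩

open FreeGroup (of lift mk) in
instance residuallyFinite_freeGroup {α : Type*} : Group.ResiduallyFinite (FreeGroup α) := by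
  classical
  refine Group.residuallyFinite_of_forall_exists_finite_monoidHom fun g hg => ?_
  -- Partial translations of the suffixes of `g` extend to permutations, whence `g` moves `1`.
  let V : Set (FreeGroup α) := {v | v ∈ g.toWord.tails.map mk}
  have : Finite V := List.finite_toSet _
  have hV {t : List (α × Bool)} (ht : t <:+ g.toWord) : mk t ∈ V :=
    List.mem_map_of_mem ((List.mem_tails _ _).mpr ht)
  choose p hp using fun i => exists_perm_forall_mul_mem V (of i : FreeGroup α)
  have hpath (t : List (α × Bool)) (ht : t <:+ g.toWord) :
      (lift p (mk t) ⟨1, hV List.nil_suffix⟩ : FreeGroup α) = mk t := by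
    induction t with
    | nil => rfl
    | cons x t ih =>
      have ht' := (List.suffix_cons x t).trans ht
      have ih := Subtype.ext (a2 := ⟨_, hV ht'⟩) (ih ht')
      obtain ⟨i, b | b⟩ := x
      · have hcancel : of i * mk ((i, false) :: t) = mk t := mul_inv_cancel_left (of i) (mk t)
        have hstep : p i ⟨_, hV ht⟩ = ⟨_, hV ht'⟩ :=
          Subtype.ext ((hp i ⟨_, hV ht⟩ (hcancel ▸ hV ht')).trans hcancel)
        have hmk : mk ((i, false) :: t) = (of i)⁻¹ * mk t := rfl
        rw [hmk, map_mul, Equiv.Perm.mul_apply, ih, map_inv, FreeGroup.lift_apply_of, ← hstep,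
          Equiv.Perm.coe_inv, Equiv.symm_apply_apply]
        exact hmk
      · have hmk : mk ((i, true) :: t) = of i * mk t := rfl
        rw [hmk, map_mul, Equiv.Perm.mul_apply, ih, FreeGroup.lift_apply_of,
          hp i ⟨_, hV ht'⟩ (hV ht)]
  refine ⟨Equiv.Perm V, inferInstance, inferInstance, lift p, fun h => hg ?_⟩
  simpa [h, FreeGroup.mk_toWord] using (hpath g.toWord List.suffix_rfl).symm

lemma exists_finiteIndexNormalSubgroup_forall_notMem {G : Type*} [Group G]
    [Group.ResiduallyFinite G] {S : Set G} (hS : S.Finite) (h1 : 1 ∉ S) :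
    ∃ N : FiniteIndexNormalSubgroup G, ∀ g ∈ S, g ∉ N := by
  have : Nonempty (FiniteIndexNormalSubgroup G) := ⟨.ofSubgroup ⊤⟩
  have : Finite S := hS
  choose N hN using fun g : S =>
    Group.exists_finiteIndexNormalSubgroup_notMem g.1 (ne_of_mem_of_not_mem g.2 h1)
  obtain ⟨M, hM⟩ := (Set.finite_range N).bddBelow
  exact ⟨M, fun g hg hgM => hN ⟨g, hg⟩ (hM (Set.mem_range_self _) hgM)⟩

end ResiduallyFinite

section EdgeParity

open FreeGroup (of lift mk)

variable {α H : Type*} [Group H] (φ : FreeGroup α →* H)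

open Classical in
/-- The Magnus-type lift of `φ` to a wreath product. Its left component maps a group element to the
parities of the numbers of times the path of that element crosses the edges of the Cayley graph of
`H`, where `(h, i)` stands for the edge from `h` to `h * φ (of i)`; its right component is `φ`. -/
noncomputable def edgeParity :
    FreeGroup α →* (α → Multiplicative (ZMod 2)) ≀ᵣ H :=
  lift fun i => ⟨Pi.mulSingle 1 (Pi.mulSingle i (.ofAdd 1)), φ (of i)⟩

open Classical in
/-- The edge of the Cayley graph crossed by the one-letter path `x` starting at `1`. -/
noncomputable def firstEdge (x : α × Bool) : H × α :=
  (if x.2 then 1 else (φ (of x.1))⁻¹, x.1)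

/-- The path of `w` in the Cayley graph never visits the same vertex twice. -/
def SelfAvoiding (w : List (α × Bool)) : Prop :=
  ∀ u, u <:+: w → u ≠ [] → φ (mk u) ≠ 1

variable {φ}

lemma SelfAvoiding.of_cons {x : α × Bool} {w : List (α × Bool)} (h : SelfAvoiding φ (x :: w)) :
    SelfAvoiding φ w :=
  fun _ hu => h _ (hu.trans (List.suffix_cons x w).isInfix)

variable (φ)

lemma edgeParity_right (g : FreeGroup α) : (edgeParity φ g).right = φ g := by
  have : RegularWreathProduct.rightHom.comp (edgeParity φ) = φ := by
    ext i
    simp [edgeParity]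
  exact DFunLike.congr_fun this g

open Classical in
lemma edgeParity_letter_left (x : α × Bool) (h : H) (j : α) :
    (edgeParity φ (mk [x])).left h j =
      if (h, j) = firstEdge φ x then Multiplicative.ofAdd 1 else 1 := by
  obtain ⟨i, b | b⟩ := x
  · have hmk : mk [(i, false)] = (of i)⁻¹ := rfl
    have hneg : (Multiplicative.ofAdd (1 : ZMod 2))⁻¹ = Multiplicative.ofAdd 1 := by decide
    by_cases hh : h = (φ (of i))⁻¹ <;> by_cases hj : j = i <;>
      simp [edgeParity, firstEdge, hmk, mul_eq_one_iff_eq_inv', hh, hj, hneg]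
  · have hmk : mk [(i, true)] = of i := rfl
    by_cases hh : h = 1 <;> simp [edgeParity, firstEdge, hmk, Pi.mulSingle_apply, hh]

open Classical in
lemma edgeParity_cons_left (x : α × Bool) (w : List (α × Bool)) (h : H) (j : α) :
    (edgeParity φ (mk (x :: w))).left h j =
      (if (h, j) = firstEdge φ x then Multiplicative.ofAdd 1 else 1) *
        (edgeParity φ (mk w)).left ((φ (mk [x]))⁻¹ * h) j := by
  have hmk : mk (x :: w) = mk [x] * mk w := rfl
  rw [hmk, map_mul, RegularWreathProduct.mul_left, Pi.mul_apply, Pi.mul_apply,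
    edgeParity_letter_left, edgeParity_right]

lemma exists_prefix_of_edgeParity_left_ne_one {w : List (α × Bool)} {h : H} {j : α}
    (hw : (edgeParity φ (mk w)).left h j ≠ 1) :
    (∃ u, u <+: w ∧ φ (mk u) = h) ∧ ∃ v, v <+: w ∧ φ (mk v) = h * φ (of j) := by
  classical
  induction w generalizing h with
  | nil => exact absurd (by rw [← FreeGroup.one_eq_mk, map_one]; rfl) hw
  | cons x w ih =>
    rw [edgeParity_cons_left] at hw
    split_ifs at hw with hx
    · obtain ⟨i, b | b⟩ := x <;> obtain ⟨rfl, rfl⟩ := Prod.mk.inj hx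
      · have hx' : φ (mk [(j, false)]) = (φ (of j))⁻¹ := map_inv φ (of j)
        exact ⟨⟨[(j, false)], by simp, by simp [hx']⟩, [], by simp, by simp [← FreeGroup.one_eq_mk]⟩
      · exact ⟨⟨[], by simp, by simp [← FreeGroup.one_eq_mk]⟩, [(j, true)], by simp, by simp [of]⟩
    · rw [one_mul] at hw
      obtain ⟨⟨u, hu, hφu⟩, v, hv, hφv⟩ := ih hw
      have hcons (u : List (α × Bool)) : φ (mk (x :: u)) = φ (mk [x]) * φ (mk u) :=
        map_mul φ (mk [x]) (mk u)
      refine ⟨⟨x :: u, ?_, by rw [hcons, hφu, mul_inv_cancel_left]⟩,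
        x :: v, ?_, by rw [hcons, hφv]; group⟩
      all_goals simpa

variable {φ}

lemma SelfAvoiding.edgeParity_left_tail {x : α × Bool} {w : List (α × Bool)}
    (hw : SelfAvoiding φ (x :: w)) (y : α × Bool) :
    (edgeParity φ (mk w)).left ((φ (mk [x]))⁻¹ * (firstEdge φ y).1) (firstEdge φ y).2 = 1 := by
  by_contra hne
  obtain ⟨⟨u, hu, hφu⟩, v, hv, hφv⟩ := exists_prefix_of_edgeParity_left_ne_one φ hne
  have hcons {u : List (α × Bool)} (hu : u <+: w) : φ (mk [x]) * φ (mk u) ≠ 1 := by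
    rw [← map_mul]
    exact hw (x :: u) ((List.cons_prefix_cons.mpr ⟨rfl, hu⟩).isInfix) (by simp)
  obtain ⟨i, b | b⟩ := y
  · exact hcons hv (by rw [hφv]; simp [firstEdge])
  · exact hcons hu (by rw [hφu]; simp [firstEdge])

open Classical in
lemma SelfAvoiding.edgeParity_left_firstEdge {x : α × Bool} {w : List (α × Bool)}
    (hw : SelfAvoiding φ (x :: w)) (y : α × Bool) :
    (edgeParity φ (mk (x :: w))).left (firstEdge φ y).1 (firstEdge φ y).2 =
      if firstEdge φ y = firstEdge φ x then Multiplicative.ofAdd 1 else 1 := by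
  rw [edgeParity_cons_left, hw.edgeParity_left_tail, mul_one]

lemma SelfAvoiding.eq_of_firstEdge_eq {x y : α × Bool} {w : List (α × Bool)}
    (hw : SelfAvoiding φ (x :: w)) (hxy : firstEdge φ x = firstEdge φ y) : x = y := by
  obtain ⟨i, b⟩ := x
  obtain ⟨j, c⟩ := y
  obtain rfl : i = j := congrArg Prod.snd hxy
  have hinv (b : Bool) : mk [(i, b)] = if b then of i else (of i)⁻¹ := by cases b <;> rfl
  have hi : φ (of i) ≠ 1 := by
    have hx := hw [(i, b)] (List.prefix_append _ w).isInfix (by simp)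
    rw [hinv] at hx
    cases b <;> simpa using hx
  cases b <;> cases c <;> simp_all [firstEdge]

theorem injOn_edgeParity_selfAvoiding :
    Set.InjOn (fun w => edgeParity φ (mk w)) {w | SelfAvoiding φ w} := by
  classical
  have hne_nil {x : α × Bool} {w : List (α × Bool)} (hw : SelfAvoiding φ (x :: w)) :
      edgeParity φ (mk (x :: w)) ≠ edgeParity φ (mk []) := by
    intro h
    have hx := hw.edgeParity_left_firstEdge x
    rw [h, if_pos rfl, ← FreeGroup.one_eq_mk, map_one] at hx
    exact absurd hx (by decide : (1 : Multiplicative (ZMod 2)) ≠ .ofAdd 1)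
  intro w hw w' hw' h
  induction w generalizing w' with
  | nil =>
    cases w' with
    | nil => rfl
    | cons y w' => exact absurd h.symm (hne_nil hw')
  | cons x w ih =>
    cases w' with
    | nil => exact absurd h (hne_nil hw)
    | cons y w' =>
      have hx := hw.edgeParity_left_firstEdge x
      dsimp only at h
      rw [h, SelfAvoiding.edgeParity_left_firstEdge hw', if_pos rfl] at hx
      have hxy : firstEdge φ x = firstEdge φ y := by
        by_contra hne
        rw [if_neg hne] at hx
        exact absurd hx (by decide)
      obtain rfl : x = y := hw.eq_of_firstEdge_eq hxy
      have htail : edgeParity φ (mk w) = edgeParity φ (mk w') := by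
        apply mul_left_cancel (a := edgeParity φ (mk [x]))
        rw [← map_mul, ← map_mul]
        exact h
      rw [ih hw.of_cons hw'.of_cons htail]

end EdgeParity

section Words

open FreeGroup (IsReduced mk lift invRev)

variable {α : Type*}

lemma exists_le_ncard_isChain_cons [Finite α] [Nonempty α] {R : α → α → Prop} {d : ℕ}
    (hR : ∀ a, d ≤ {b | R b a}.ncard) {w : List α} (hw : w.IsChain R) :
    ∃ s : Set α, d ≤ s.ncard ∧ ∀ b ∈ s, (b :: w).IsChain R := by
  cases w with
  | nil =>
    obtain ⟨a⟩ := ‹Nonempty α›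
    exact ⟨_, hR a, fun b _ => .singleton b⟩
  | cons a w => exact ⟨_, hR a, fun b hb => List.isChain_cons_cons.mpr ⟨hb, hw⟩⟩

theorem pow_le_ncard_isChain [Finite α] [Nonempty α] {R : α → α → Prop} {d : ℕ}
    (hR : ∀ a, d ≤ {b | R b a}.ncard) (l : ℕ) :
    d ^ l ≤ {w : List α | w.length = l ∧ w.IsChain R}.ncard := by
  classical
  have hfin (l : ℕ) : {w : List α | w.length = l ∧ w.IsChain R}.Finite :=
    (List.finite_length_eq α l).subset fun _ => And.left
  induction l with
  | zero => exact (Set.ncard_pos (hfin 0)).mpr ⟨[], rfl, .nil⟩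
  | succ l ih =>
    rw [Set.ncard_eq_toFinset_card _ (hfin l)] at ih
    rw [Set.ncard_eq_toFinset_card _ (hfin (l + 1)), pow_succ']
    refine (Nat.mul_le_mul_left d ih).trans
      (Finset.mul_card_image_le_card_of_maps_to (f := List.tail) ?_ d ?_)
    · intro w hw
      obtain ⟨hl, hw⟩ := (hfin (l + 1)).mem_toFinset.mp hw
      exact (hfin l).mem_toFinset.mpr ⟨by simp [hl], hw.tail⟩
    · intro w hw
      obtain ⟨hl, hw⟩ := (hfin l).mem_toFinset.mp hw
      obtain ⟨s, hds, hs⟩ := exists_le_ncard_isChain_cons hR hw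
      refine hds.trans ?_
      have hinj : Function.Injective (· :: w) := fun _ _ h => (List.cons.inj h).1
      rw [← Set.ncard_image_of_injective s hinj,
        ← Set.ncard_coe_finset]
      refine Set.ncard_le_ncard ?_ (Finset.finite_toSet _)
      rintro _ ⟨b, hb, rfl⟩
      simp [hs b hb, hl]

theorem pow_le_ncard_isReduced [Finite α] [Nonempty α] (l : ℕ) :
    (2 * Nat.card α - 1) ^ l ≤ {w : List (α × Bool) | w.length = l ∧ IsReduced w}.ncard := by
  refine pow_le_ncard_isChain (fun a => ?_) l
  have hcompl : {b : α × Bool | b.1 = a.1 → b.2 = a.2} = {(a.1, !a.2)}ᶜ := by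
    ext ⟨i, b⟩
    cases b <;> cases a.2 <;> simp
  rw [hcompl, Set.ncard_compl, Set.ncard_singleton, Nat.card_prod,
    Nat.card_eq_fintype_card (α := Bool), Fintype.card_bool, mul_comm]

lemma isReduced_invRev {w : List (α × Bool)} (hw : IsReduced w) : IsReduced (invRev w) := by
  classical
  rw [FreeGroup.isReduced_iff_reduce_eq, FreeGroup.reduce_invRev, hw.reduce_eq]

lemma exists_isReduced_cons (i : α) {w : List (α × Bool)} (hw : IsReduced w) :
    ∃ e, IsReduced ((i, e) :: w) := by
  cases w with
  | nil => exact ⟨true, .singleton⟩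
  | cons x w => exact ⟨x.2, FreeGroup.isReduced_cons_cons.mpr ⟨fun _ => rfl, hw⟩⟩

lemma exists_isReduced_append_singleton (i : α) {w : List (α × Bool)} (hw : IsReduced w) :
    ∃ e, IsReduced (w ++ [(i, e)]) := by
  obtain ⟨e, he⟩ := exists_isReduced_cons i (isReduced_invRev hw)
  exact ⟨!e, by
    have := isReduced_invRev he
    rwa [FreeGroup.invRev_cons, FreeGroup.invRev_invRev] at this⟩

/-- The exponent `1` or `-1` of a letter. -/
def letterExponent (x : α × Bool) : ℤ :=
  if x.2 then 1 else -1

/-- The total exponent of a word. -/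
def height (w : List (α × Bool)) : ℤ :=
  (w.map letterExponent).sum

/-- The homomorphism to `ℤ` induced by `height`. -/
def heightHom : FreeGroup α →* Multiplicative ℤ :=
  lift fun _ => .ofAdd 1

lemma neg_one_le_letterExponent (x : α × Bool) : -1 ≤ letterExponent x := by
  obtain ⟨i, b | b⟩ := x <;> simp [letterExponent]

@[simp]
lemma height_nil : height ([] : List (α × Bool)) = 0 := rfl

@[simp]
lemma height_cons (x : α × Bool) (w : List (α × Bool)) :
    height (x :: w) = letterExponent x + height w := by
  simp [height]

@[simp]
lemma height_append (u w : List (α × Bool)) : height (u ++ w) = height u + height w := by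
  simp [height]

lemma heightHom_mk (w : List (α × Bool)) : heightHom (mk w) = .ofAdd (height w) := by
  induction w with
  | nil => rfl
  | cons x w ih =>
    rw [height_cons, ofAdd_add, ← ih]
    obtain ⟨i, b | b⟩ := x <;> rfl

lemma height_invRev (w : List (α × Bool)) : height (invRev w) = -height w := by
  apply Multiplicative.ofAdd.injective
  rw [← heightHom_mk, ← FreeGroup.inv_mk, map_inv, heightHom_mk, ofAdd_neg]

lemma neg_length_le_height (w : List (α × Bool)) : -(w.length : ℤ) ≤ height w := by
  induction w with
  | nil => simp
  | cons x w ih =>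
    have := neg_one_le_letterExponent x
    rw [height_cons, List.length_cons]
    lia

theorem pow_le_two_mul_ncard_isReduced_height_nonneg [Finite α] [Nonempty α] (l : ℕ) :
    (2 * Nat.card α - 1) ^ l ≤
      2 * {w : List (α × Bool) | w.length = l ∧ IsReduced w ∧ 0 ≤ height w}.ncard := by
  set P := {w : List (α × Bool) | w.length = l ∧ IsReduced w ∧ 0 ≤ height w}
  have hP : P.Finite := (List.finite_length_eq _ l).subset fun _ => And.left
  have hcover : {w : List (α × Bool) | w.length = l ∧ IsReduced w} ⊆ P ∪ invRev '' P := by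
    rintro w ⟨hl, hw⟩
    rcases le_total 0 (height w) with h | h
    · exact .inl ⟨hl, hw, h⟩
    · exact .inr ⟨invRev w, ⟨by simpa using hl, isReduced_invRev hw, by simpa [height_invRev]⟩,
        FreeGroup.invRev_invRev⟩
  calc (2 * Nat.card α - 1) ^ l
      ≤ {w : List (α × Bool) | w.length = l ∧ IsReduced w}.ncard := pow_le_ncard_isReduced l
    _ ≤ (P ∪ invRev '' P).ncard := Set.ncard_le_ncard hcover (hP.union (hP.image _))
    _ ≤ P.ncard + (invRev '' P).ncard := Set.ncard_union_le _ _
    _ = 2 * P.ncard := by rw [Set.ncard_image_of_injective _ FreeGroup.invRev_injective, two_mul]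

/-- A word usable as a factor in a concatenation: the conditions on its first and last letters keep
concatenations reduced, and the condition on its height makes their heights grow linearly. -/
structure IsPositiveBlock (a : α × Bool) (w : List (α × Bool)) : Prop where
  isReduced : IsReduced w
  one_le_height : 1 ≤ height w
  head?_eq : w.head? = some a
  fst_getLast?_ne : ∀ x ∈ w.getLast?, x.1 ≠ a.1

lemma exists_isPositiveBlock {i j : α} (hij : i ≠ j) {u : List (α × Bool)} (hu : IsReduced u)
    (h0 : 0 ≤ height u) :
    ∃ w, IsPositiveBlock (i, true) w ∧ w.length = u.length + 5 ∧ (w.drop 4).dropLast = u := by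
  obtain ⟨e, he⟩ := exists_isReduced_cons j hu
  obtain ⟨e', he'⟩ := exists_isReduced_append_singleton j he
  -- Three leading letters keep the height positive, whatever the signs `e` and `e'` are.
  refine ⟨(i, true) :: (i, true) :: (i, true) :: ((j, e) :: u ++ [(j, e')]),
    ⟨?_, ?_, rfl, ?_⟩, by simp, by simp⟩
  · simpa [hij, hij.symm] using he'
  · have h1 := neg_one_le_letterExponent (j, e)
    have h2 := neg_one_le_letterExponent (j, e')
    have hi : letterExponent (i, true) = 1 := rfl
    simp only [height_cons, height_append, height_nil, hi]
    lia
  · simp [List.getLast?_cons, List.getLast?_append, hij.symm]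

theorem pow_le_two_mul_ncard_isPositiveBlock [Finite α] {i j : α} (hij : i ≠ j) (l : ℕ) :
    (2 * Nat.card α - 1) ^ l ≤
      2 * {w | IsPositiveBlock (i, true) w ∧ w.length = l + 5}.ncard := by
  have : Nonempty α := ⟨i⟩
  have hfin : {w | IsPositiveBlock (i, true) w ∧ w.length = l + 5}.Finite :=
    (List.finite_length_eq _ (l + 5)).subset fun _ => And.right
  refine (pow_le_two_mul_ncard_isReduced_height_nonneg l).trans (Nat.mul_le_mul_left 2 ?_)
  calc {w : List (α × Bool) | w.length = l ∧ IsReduced w ∧ 0 ≤ height w}.ncard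
      ≤ ((fun w => (w.drop 4).dropLast) ''
          {w | IsPositiveBlock (i, true) w ∧ w.length = l + 5}).ncard := by
        refine Set.ncard_le_ncard ?_ (hfin.image _)
        rintro u ⟨rfl, hu, h0⟩
        obtain ⟨w, hw, hl, hwu⟩ := exists_isPositiveBlock hij hu h0
        exact ⟨w, ⟨hw, hl⟩, hwu⟩
    _ ≤ _ := Set.ncard_image_le hfin

end Words

section Concatenation

open FreeGroup (IsReduced mk)

section WeightedLists

variable {β M : Type*} [AddCommMonoid M] [PartialOrder M] [IsOrderedAddMonoid M]
  {f : β → M} {B : M} {bs : List (List β)}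

lemma le_sum_map_of_prefix_flatten (hB : B ≤ 0) (hsum : ∀ b ∈ bs, 0 ≤ (b.map f).sum)
    (hpre : ∀ b ∈ bs, ∀ u, u <+: b → B ≤ (u.map f).sum) {u : List β} (hu : u <+: bs.flatten) :
    B ≤ (u.map f).sum := by
  induction bs generalizing u with
  | nil => simpa [List.prefix_nil.mp hu] using hB
  | cons b bs ih =>
    rw [List.forall_mem_cons] at hsum hpre
    rw [List.flatten_cons] at hu
    obtain ⟨t, ht⟩ := hu
    obtain ⟨v, hv, -⟩ | ⟨v, rfl, hv⟩ := List.append_eq_append_iff.mp ht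
    · exact hpre.1 u ⟨v, hv.symm⟩
    · simpa using add_le_add hsum.1 (ih hsum.2 hpre.2 ⟨t, hv.symm⟩)

lemma add_self_le_sum_map_of_infix_flatten (hB : B ≤ 0) (hsum : ∀ b ∈ bs, 0 ≤ (b.map f).sum)
    (hinf : ∀ b ∈ bs, ∀ u, u <:+: b → B ≤ (u.map f).sum) {u : List β} (hu : u <:+: bs.flatten) :
    B + B ≤ (u.map f).sum := by
  have hBB : B + B ≤ B := add_le_of_nonpos_right hB
  induction bs generalizing u with
  | nil => simpa [List.infix_nil.mp hu] using hBB.trans hB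
  | cons b bs ih =>
    rw [List.forall_mem_cons] at hsum hinf
    rw [List.flatten_cons, List.infix_append_iff] at hu
    obtain hub | hubs | ⟨v, w, rfl, hv, hw⟩ := hu
    · exact hBB.trans (hinf.1 u hub)
    · exact ih hsum.2 hinf.2 hubs
    · rw [List.map_append, List.sum_append]
      exact add_le_add (hinf.1 v hv.isInfix)
        (le_sum_map_of_prefix_flatten hB hsum.2 (fun b hb u hu => hinf.2 b hb u hu.isInfix) hw)

end WeightedLists

variable {α : Type*} {bs : List (List (α × Bool))} {L : ℕ}

lemma length_le_of_infix_flatten_of_height_eq_zero (hlen : ∀ b ∈ bs, b.length = L)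
    (hpos : ∀ b ∈ bs, 1 ≤ height b) {u : List (α × Bool)} (hu : u <:+: bs.flatten)
    (h0 : height u = 0) : u.length ≤ 2 * (L * (L + 1)) := by
  -- With this weight every block, having length `L` and height at least `1`, has sum `≥ 0`.
  have hweight (w : List (α × Bool)) :
      (w.map fun x => L * letterExponent x - 1).sum = L * height w - w.length := by
    induction w with
    | nil => simp
    | cons x w ih =>
      simp only [List.map_cons, List.sum_cons, ih, height_cons, List.length_cons]
      push_cast
      ring
  have hmain : -(L * (L + 1) : ℤ) + -(L * (L + 1)) ≤
      (u.map fun x => L * letterExponent x - 1).sum := by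
    refine add_self_le_sum_map_of_infix_flatten ?_ (fun b hb => ?_) (fun b hb v hv => ?_) hu
    · rw [neg_nonpos]
      positivity
    · rw [hweight, hlen b hb]
      nlinarith [hpos b hb]
    · have hvL : (v.length : ℤ) ≤ L := mod_cast hlen b hb ▸ hv.length_le
      rw [hweight]
      nlinarith [neg_length_le_height v]
  rw [hweight, h0] at hmain
  zify
  linarith

lemma isReduced_flatten {a : α × Bool} (hbs : ∀ b ∈ bs, IsPositiveBlock a b) :
    IsReduced bs.flatten := by
  have hnil : [] ∉ bs := fun h => by simpa using (hbs [] h).head?_eq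
  rw [FreeGroup.IsReduced, List.isChain_flatten hnil]
  refine ⟨fun b hb => (hbs b hb).isReduced, List.Pairwise.isChain ?_⟩
  refine List.pairwise_of_forall_mem_list fun b hb c hc x hx y hy hxy => ?_
  rw [Option.mem_def, (hbs c hc).head?_eq] at hy
  cases hy
  exact absurd hxy ((hbs b hb).fst_getLast?_ne x hx)

theorem exists_selfAvoiding_flatten [Finite α] (a : α × Bool) (L : ℕ) :
    ∃ N : FiniteIndexNormalSubgroup (FreeGroup α), ∀ bs : List (List (α × Bool)),
      (∀ b ∈ bs, IsPositiveBlock a b ∧ b.length = L) →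
        SelfAvoiding ((QuotientGroup.mk' N.toSubgroup).prod heightHom) bs.flatten := by
  classical
  obtain ⟨N, hN⟩ := exists_finiteIndexNormalSubgroup_forall_notMem
    (S := mk '' {w : List (α × Bool) | w.length ≤ 2 * (L * (L + 1)) ∧ IsReduced w ∧ w ≠ []})
    (((List.finite_length_le _ _).subset fun _ => And.left).image mk) (by
      rintro ⟨w, ⟨-, hw, hne⟩, h1⟩
      rw [← FreeGroup.toWord_eq_nil_iff, FreeGroup.toWord_mk, hw.reduce_eq] at h1
      exact hne h1)
  refine ⟨N, fun bs hbs u hu hne h => ?_⟩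
  obtain ⟨huN, hu0⟩ := Prod.mk.inj h
  rw [heightHom_mk] at hu0
  refine hN (mk u) ⟨u, ⟨?_, (isReduced_flatten fun b hb => (hbs b hb).1).infix hu, hne⟩, rfl⟩
    ((QuotientGroup.eq_one_iff _).mp huN)
  exact length_le_of_infix_flatten_of_height_eq_zero (fun b hb => (hbs b hb).2)
    (fun b hb => (hbs b hb).1.one_le_height) hu hu0

end Concatenation

section Growth

open FreeGroup (of lift mk)

variable {m : ℕ} {G : Type*} [Group G] {σ : Fin m → G}

variable (σ) in
lemma wordEval_eq_lift (w : List (Fin m × Bool)) : wordEval σ w = lift σ (mk w) := by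
  simp only [wordEval, FreeGroup.lift_mk, cond_eq_ite]

lemma wordEval_map_of (f : FreeGroup (Fin m) →* G) (w : List (Fin m × Bool)) :
    wordEval (fun i => f (of i)) w = f (mk w) := by
  rw [wordEval_eq_lift]
  exact DFunLike.congr_fun (FreeGroup.lift.apply_symm_apply f) (mk w)

variable (σ) in
lemma finite_ball (n : ℕ) : (ball σ n).Finite :=
  (List.finite_length_le (Fin m × Bool) n).image (wordEval σ)

variable (σ) in
lemma ball_subset_ball_one_pow (n : ℕ) : ball σ n ⊆ ball σ 1 ^ n := by
  rintro _ ⟨w, hw, rfl⟩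
  induction w generalizing n with
  | nil => exact Set.one_mem_pow ⟨[], by simp, rfl⟩
  | cons x w ih =>
    obtain ⟨n, rfl⟩ := Nat.exists_eq_succ_of_ne_zero (Nat.ne_zero_of_lt hw)
    have hcons : wordEval σ (x :: w) = wordEval σ [x] * wordEval σ w := by simp [wordEval]
    rw [hcons, Nat.succ_eq_add_one, pow_succ']
    exact Set.mul_mem_mul ⟨[x], by simp, rfl⟩ (ih n (by simpa using hw))

variable (σ) in
lemma ncard_ball_le_pow (n : ℕ) : (ball σ n).ncard ≤ (ball σ 1).ncard ^ n := by
  classical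
  have hsub := ball_subset_ball_one_pow σ n
  lift ball σ 1 to Finset G using finite_ball σ 1 with B
  rw [← Finset.coe_pow] at hsub
  calc (ball σ n).ncard ≤ (↑(B ^ n) : Set G).ncard := Set.ncard_le_ncard hsub
    _ ≤ (B : Set G).ncard ^ n := by
      rw [Set.ncard_coe_finset, Set.ncard_coe_finset]
      exact Finset.card_pow_le

theorem le_growthRate_of_frequently_pow_le {x : ℝ} (hx : 0 ≤ x)
    (h : ∃ᶠ n in atTop, x ^ n ≤ (ball σ n).ncard) : x ≤ growthRate σ := by
  refine le_limsup_of_frequently_le ?_ ?_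
  · refine (h.and_eventually (eventually_ne_atTop 0)).mono fun n ⟨hn, hn0⟩ => ?_
    rw [one_div]
    exact (Real.le_rpow_inv_iff_of_pos hx (by positivity) (by positivity)).mpr (mod_cast hn)
  · refine ⟨(ball σ 1).ncard, eventually_map.mpr ?_⟩
    filter_upwards [eventually_ne_atTop 0] with n hn0
    rw [one_div]
    refine (Real.rpow_inv_le_iff_of_pos (by positivity) (by positivity) (by positivity)).mpr ?_
    exact_mod_cast ncard_ball_le_pow σ n

variable {C : Set (List (Fin m × Bool))} {L : ℕ}

lemma pow_ncard_le_ncard_ball (hC : ∀ b ∈ C, b.length = L)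
    (hinj : Set.InjOn (wordEval σ) (List.flatten '' {bs | ∀ b ∈ bs, b ∈ C})) (k : ℕ) :
    C.ncard ^ k ≤ (ball σ (k * L)).ncard := by
  let code (f : Fin k → C) : List (List (Fin m × Bool)) := List.ofFn fun i => (f i : List _)
  have hcode (f : Fin k → C) : ∀ b ∈ code f, b ∈ C := by
    simp [code]
  have hmap (f : Fin k → C) : (code f).map List.length = List.replicate k L :=
    List.eq_replicate_iff.mpr ⟨by simp [code], by
      simpa using fun b hb => hC b (hcode f b hb)⟩
  let val (f : Fin k → C) : ball σ (k * L) :=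
    ⟨wordEval σ (code f).flatten, (code f).flatten, by simp [List.length_flatten, hmap], rfl⟩
  have hval : Function.Injective val := by
    intro f g hfg
    have hflat := hinj ⟨_, hcode f, rfl⟩ ⟨_, hcode g, rfl⟩ (congrArg Subtype.val hfg)
    have hfg := List.eq_iff_flatten_eq.mpr ⟨hflat, (hmap f).trans (hmap g).symm⟩
    exact funext fun i => Subtype.ext (congrFun (List.ofFn_injective hfg) i)
  have : Finite (ball σ (k * L)) := finite_ball σ _
  simpa [Nat.card_fun, Nat.card_coe_set_eq] using Nat.card_le_card_of_injective val hval

theorem le_growthRate_of_injOn_flatten (hL : L ≠ 0) (hC : ∀ b ∈ C, b.length = L)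
    (hinj : Set.InjOn (wordEval σ) (List.flatten '' {bs | ∀ b ∈ bs, b ∈ C})) {x : ℝ}
    (hx : 0 ≤ x) (hxC : x ^ L ≤ C.ncard) : x ≤ growthRate σ := by
  refine le_growthRate_of_frequently_pow_le hx (frequently_atTop.mpr fun k => ?_)
  refine ⟨k * L, Nat.le_mul_of_pos_right k (Nat.pos_of_ne_zero hL), ?_⟩
  calc x ^ (k * L) = (x ^ L) ^ k := by rw [← pow_mul, mul_comm]
    _ ≤ (C.ncard : ℝ) ^ k := by gcongr
    _ ≤ (ball σ (k * L)).ncard := mod_cast pow_ncard_le_ncard_ball hC hinj k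

end Growth

section EdgeParityRange

open FreeGroup (of mk)

variable {H : Type*} [Group H]

lemma isAmenable_range_edgeParity {α : Type*} (hH : FoelnerCondition H) (φ : FreeGroup α →* H) :
    IsAmenable (edgeParity φ).range := by
  have hexp : Monoid.ExponentExists (α → Multiplicative (ZMod 2)) :=
    ⟨2, two_pos, fun f => funext fun i => by
      have (z : Multiplicative (ZMod 2)) : z ^ 2 = 1 := by decide +revert
      exact this (f i)⟩
  exact (FoelnerCondition.regularWreathProduct hexp hH).isAmenable.subgroup _

lemma closure_range_map_of {α W : Type*} [Group W] {f : FreeGroup α →* W}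
    (hf : Function.Surjective f) : Subgroup.closure (Set.range fun i => f (of i)) = ⊤ := by
  rw [← Function.comp_def, Set.range_comp, ← MonoidHom.map_closure, FreeGroup.closure_range_of,
    ← MonoidHom.range_eq_map, MonoidHom.range_eq_top.mpr hf]

theorem le_growthRate_range_edgeParity {m L : ℕ} {φ : FreeGroup (Fin m) →* H}
    {C : Set (List (Fin m × Bool))} (hL : L ≠ 0) (hC : ∀ b ∈ C, b.length = L)
    (hφ : ∀ bs : List (List (Fin m × Bool)), (∀ b ∈ bs, b ∈ C) → SelfAvoiding φ bs.flatten)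
    {x : ℝ} (hx : 0 ≤ x) (hxC : x ^ L ≤ C.ncard) :
    x ≤ growthRate fun i => (edgeParity φ).rangeRestrict (of i) := by
  refine le_growthRate_of_injOn_flatten hL hC ?_ hx hxC
  rintro _ ⟨bs, hbs, rfl⟩ _ ⟨bs', hbs', rfl⟩ h
  rw [wordEval_map_of, wordEval_map_of] at h
  exact injOn_edgeParity_selfAvoiding (hφ bs hbs) (hφ bs' hbs') (congrArg Subtype.val h)

end EdgeParityRange

lemma exists_mul_pow_le_pow (c : ℝ) {x y : ℝ} (hx : 0 ≤ x) (hxy : x < y) :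
    ∃ n : ℕ, c * x ^ n ≤ y ^ n := by
  have h := ((isLittleO_pow_pow_of_lt_left hx hxy).const_mul_left c).bound one_pos
  obtain ⟨n, hn⟩ := h.exists
  rw [one_mul, Real.norm_of_nonneg (pow_nonneg (hx.trans hxy.le) n)] at hn
  exact ⟨n, (Real.le_norm_self _).trans hn⟩

theorem exists_isAmenableWithLargeGrowth {m : ℕ} (hm : 2 ≤ m) {ε : ℝ} (hε : 0 < ε) :
    ∃ (G : Type) (_ : Group G) (σ : Fin m → G), IsAmenableWithLargeGrowth m ε G σ := by
  have hm' : (2 : ℝ) ≤ m := mod_cast hm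
  set x : ℝ := max (2 * m - 1 - ε) 0
  have hx : 0 ≤ x := le_max_right _ _
  obtain ⟨l, hl⟩ := exists_mul_pow_le_pow (2 * x ^ 5) hx
    (max_lt (by linarith) (by linarith) : x < 2 * m - 1)
  let i : Fin m := ⟨0, by lia⟩
  let j : Fin m := ⟨1, by lia⟩
  let C := {w | IsPositiveBlock (i, true) w ∧ w.length = l + 5}
  have hcard : (2 * Nat.card (Fin m) - 1) ^ l ≤ 2 * C.ncard :=
    pow_le_two_mul_ncard_isPositiveBlock (i := i) (j := j) (by simp [i, j]) l
  rw [Nat.card_fin] at hcard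
  obtain ⟨N, hN⟩ := exists_selfAvoiding_flatten (i, true) (l + 5)
  let φ := (QuotientGroup.mk' N.toSubgroup).prod heightHom
  refine ⟨(edgeParity φ).range, inferInstance, fun i => (edgeParity φ).rangeRestrict (.of i),
    closure_range_map_of (edgeParity φ).rangeRestrict_surjective, isAmenable_range_edgeParity ?_ φ,
    (le_max_left _ _).trans
      (le_growthRate_range_edgeParity (C := C) (by simp) (fun b hb => hb.2) hN hx ?_)⟩
  · exact .of_groupExtension (prodGroupExtension _ _) .of_finite .multiplicative_int
  · have hcard' : (2 * m - 1 : ℝ) ^ l ≤ 2 * C.ncard := by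
      have h := (Nat.cast_le (α := ℝ)).mpr hcard
      rwa [Nat.cast_pow, Nat.cast_sub (by lia), Nat.cast_mul, Nat.cast_mul, Nat.cast_ofNat,
        Nat.cast_one] at h
    rw [pow_add]
    linarith

/-- For every `m ≥ 2` and `ε > 0` there is an amenable group `G`
generated by a set of `m` elements with growth rate `ω(G, A) ≥ 2m - 1 - ε`.
Consequently there is no constant `c_m` with `1 < c_m < 2m - 1` such that every
`m`-generated group with growth rate at least `c_m` is non-amenable: this answers
de la Harpe's question in the negative. -/
theorem amenable_with_large_growth_exists (m : ℕ) (hm : 2 ≤ m) (ε : ℝ) (hε : 0 < ε) :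
    (∃ (G : Type) (instG : Group G) (σ : Fin m → G),
        @IsAmenableWithLargeGrowth m ε G instG σ) ∧
      ¬ ∃ c : ℝ, 1 < c ∧ c < 2 * (m : ℝ) - 1 ∧
        ∀ (G : Type) (instG : Group G) (σ : Fin m → G),
          @Subgroup.closure G instG (Set.range σ) = ⊤ →
          c ≤ @growthRate m G instG σ → ¬ @IsAmenable G instG := by
  refine ⟨exists_isAmenableWithLargeGrowth hm hε, ?_⟩
  rintro ⟨c, -, hc, h⟩
  obtain ⟨G, instG, σ, hσ, hG, hgrowth⟩ :=
    exists_isAmenableWithLargeGrowth hm (sub_pos.mpr hc)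
  exact h G instG σ hσ (by linarith) hG
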